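/- Let ε > 0, let r ≥ 1 be a real number, and let f : [0,r] → ℝ be concave, nondecreasing, and nonnegative with f(0) = 0. Then there exists a finite set L of affine functions with |L| ≤ max(1, ⌈log_{1+ε} r⌉) such that every g ∈ L satisfies g(x) ≥ f(x) for all x ∈ [0,r], and for every x ∈ [1,r] there exists g ∈ L with g(x) ≤ (1+ε)·f(x). -/

import Mathlib

/-!
A supporting line `g` of `f` at `a > 0` has `g 0 ≥ f 0 ≥ 0`, so `g x / x` is antitone. Hence
`g x ≤ (x / a) * f a ≤ (1 + ε) * f x` as long as `a ≤ x ≤ (1 + ε) * a`, and the supporting lines at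
the points `l, (1 + ε) * l, (1 + ε) ^ 2 * l, …` of the interval together cover `f` on `[l, r]`.
-/

open Set

lemma affine_le_mul_affine {𝕜 : Type*} [Field 𝕜] [LinearOrder 𝕜] [IsStrictOrderedRing 𝕜]
    {m d a x q : 𝕜} (ha : 0 < a) (hd : 0 ≤ d) (hma : 0 ≤ m * a + d) (hax : a ≤ x)
    (hxq : x ≤ q * a) : m * x + d ≤ q * (m * a + d) :=
  calc m * x + d = x / a * (m * a + d) - (x / a - 1) * d := by field
    _ ≤ x / a * (m * a + d) :=
      sub_le_self _ (mul_nonneg (sub_nonneg.2 ((one_le_div ha).2 hax)) hd)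
    _ ≤ q * (m * a + d) := mul_le_mul_of_nonneg_right ((div_le_iff₀ ha).2 hxq) hma

/-- The graph of `x ↦ g.1 * x + g.2` touches that of `f` at `a` and lies above it on `s`, as for a
tangent line of a concave function. The line is encoded by the pair (slope, intercept). -/
def IsSupportingLine (f : ℝ → ℝ) (s : Set ℝ) (a : ℝ) (g : ℝ × ℝ) : Prop :=
  g.1 * a + g.2 = f a ∧ ∀ x ∈ s, f x ≤ g.1 * x + g.2

section SupportingLine

variable {f : ℝ → ℝ} {s : Set ℝ} {a r : ℝ}

lemma exists_isSupportingLine_of_mem_interior (hf : ConcaveOn ℝ s f) (ha : a ∈ interior s) :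
    ∃ g, IsSupportingLine f s a g := by
  let m := derivWithin (-f) (Ioi a) a
  refine ⟨(-m, f a + m * a), by ring, fun x hx => ?_⟩
  suffices f x ≤ f a - m * (x - a) by linear_combination this
  rcases lt_trichotomy x a with hxa | rfl | hax
  · have hslope : slope (-f) x a ≤ m :=
      (hf.neg.slope_le_leftDeriv_of_mem_interior hx ha hxa).trans
        (hf.neg.leftDeriv_le_rightDeriv_of_mem_interior ha)
    rw [slope_def_field, div_le_iff₀ (sub_pos.2 hxa), Pi.neg_apply, Pi.neg_apply] at hslope
    linarith
  · simp
  · have hslope : m ≤ slope (-f) a x := hf.neg.rightDeriv_le_slope_of_mem_interior ha hx hax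
    rw [slope_def_field, le_div_iff₀ (sub_pos.2 hax), Pi.neg_apply, Pi.neg_apply] at hslope
    linarith

lemma isSupportingLine_of_isMaxOn (hf : IsMaxOn f s a) : IsSupportingLine f s a (0, f a) :=
  ⟨by simp, fun x hx => by simpa using hf hx⟩

lemma exists_isSupportingLine_of_monotoneOn_Icc {l : ℝ} (hconc : ConcaveOn ℝ (Icc l r) f)
    (hmono : MonotoneOn f (Icc l r)) (ha : a ∈ Ioc l r) :
    ∃ g, IsSupportingLine f (Icc l r) a g := by
  rcases ha.2.eq_or_lt with rfl | har
  · exact ⟨_, isSupportingLine_of_isMaxOn fun x hx => hmono hx (Ioc_subset_Icc_self ha) hx.2⟩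
  · exact exists_isSupportingLine_of_mem_interior hconc (interior_Icc (a := l) ▸ ⟨ha.1, har⟩)

lemma IsSupportingLine.le_mul {g : ℝ × ℝ} {x q : ℝ} (hg : IsSupportingLine f (Icc 0 r) a g)
    (hmono : MonotoneOn f (Icc 0 r)) (hf0 : 0 ≤ f 0) (ha : 0 < a) (hax : a ≤ x) (hxr : x ≤ r)
    (hxq : x ≤ q * a) : g.1 * x + g.2 ≤ q * f x := by
  have ha_mem : a ∈ Icc 0 r := ⟨ha.le, hax.trans hxr⟩
  have hx_mem : x ∈ Icc 0 r := ⟨ha.le.trans hax, hxr⟩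
  have h0_mem : (0 : ℝ) ∈ Icc 0 r := ⟨le_rfl, ha.le.trans ha_mem.2⟩
  have hq : 0 ≤ q := nonneg_of_mul_nonneg_left (hx_mem.1.trans hxq) ha
  have hintercept : 0 ≤ g.2 := by simpa using hf0.trans (hg.2 0 h0_mem)
  have hfa : 0 ≤ f a := hf0.trans (hmono h0_mem ha_mem ha.le)
  calc g.1 * x + g.2 ≤ q * (g.1 * a + g.2) :=
        affine_le_mul_affine ha hintercept (hg.1 ▸ hfa) hax hxq
    _ = q * f a := by rw [hg.1]
    _ ≤ q * f x := mul_le_mul_of_nonneg_left (hmono ha_mem hx_mem hax) hq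

end SupportingLine

lemma exists_lt_mem_Icc_succ {α : Type*} [LinearOrder α] {u : ℕ → α} {y : α} {N : ℕ}
    (hN : N ≠ 0) (h0 : u 0 ≤ y) (hy : y ≤ u N) : ∃ i < N, y ∈ Icc (u i) (u (i + 1)) := by
  induction N, Nat.one_le_iff_ne_zero.2 hN using Nat.le_induction with
  | base => exact ⟨0, one_pos, h0, hy⟩
  | succ n hn ih =>
    rcases le_total y (u n) with hyn | hny
    · obtain ⟨i, hi, hmem⟩ := ih (Nat.one_le_iff_ne_zero.1 hn) hyn
      exact ⟨i, hi.trans n.lt_succ_self, hmem⟩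
    · exact ⟨n, n.lt_succ_self, hny, hy⟩

lemma le_pow_natCeil_logb {b y : ℝ} (hb : 1 < b) (hy : 0 < y) : y ≤ b ^ ⌈Real.logb b y⌉₊ := by
  rw [← Real.rpow_natCast, ← Real.logb_le_iff_le_rpow hb hy]
  exact Nat.le_ceil _

section Cover

variable {f : ℝ → ℝ} {l r : ℝ}

lemma exists_affine_cover_of_le_mul_pow {q : ℝ} {N : ℕ} (hconc : ConcaveOn ℝ (Icc 0 r) f)
    (hmono : MonotoneOn f (Icc 0 r)) (hf0 : 0 ≤ f 0) (hl : 0 < l) (hq : 0 < q) (hN : N ≠ 0)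
    (hr : r ≤ l * q ^ N) :
    ∃ L : Finset (ℝ × ℝ), L.card ≤ N ∧
      (∀ g ∈ L, ∀ x ∈ Icc 0 r, f x ≤ g.1 * x + g.2) ∧
      ∀ x ∈ Icc l r, ∃ g ∈ L, g.1 * x + g.2 ≤ q * f x := by
  classical
  let u : ℕ → ℝ := fun i => l * q ^ i
  have hu (i : ℕ) : 0 < u i := by positivity
  have hsupport (i : ℕ) (hi : u i ≤ r) : ∃ g, IsSupportingLine f (Icc 0 r) (u i) g :=
    exists_isSupportingLine_of_monotoneOn_Icc hconc hmono ⟨hu i, hi⟩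
  choose! g hg using hsupport
  refine ⟨{i ∈ Finset.range N | u i ≤ r}.image g, ?_, ?_, fun x hx => ?_⟩
  · exact Finset.card_image_le.trans <|
      (Finset.card_filter_le _ _).trans_eq (Finset.card_range N)
  · simp only [Finset.forall_mem_image, Finset.mem_filter]
    exact fun i hi => (hg i hi.2).2
  · obtain ⟨i, hiN, hix, hxi⟩ : ∃ i < N, x ∈ Icc (u i) (u (i + 1)) :=
      exists_lt_mem_Icc_succ hN (by simpa [u] using hx.1) (hx.2.trans hr)
    have hir : u i ≤ r := hix.trans hx.2
    have hstep : u (i + 1) = q * u i := by simp only [u]; ring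
    exact ⟨g i, Finset.mem_image_of_mem g (Finset.mem_filter.2 ⟨Finset.mem_range.2 hiN, hir⟩),
      (hg i hir).le_mul hmono hf0 (hu i) hix hx.2 (hxi.trans_eq hstep)⟩

theorem concave_log_cover_general {ε : ℝ} (hε : 0 < ε) (hl : 0 < l) (hlr : l ≤ r)
    (hconc : ConcaveOn ℝ (Icc 0 r) f) (hmono : MonotoneOn f (Icc 0 r)) (hf0 : 0 ≤ f 0) :
    ∃ L : Finset (ℝ × ℝ),
      (L.card : ℤ) ≤ max 1 ⌈Real.logb (1 + ε) (r / l)⌉ ∧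
      (∀ g ∈ L, ∀ x ∈ Icc 0 r, f x ≤ g.1 * x + g.2) ∧
      (∀ x ∈ Icc l r, ∃ g ∈ L, g.1 * x + g.2 ≤ (1 + ε) * f x) := by
  have hq : 1 < 1 + ε := lt_add_of_pos_right 1 hε
  let k : ℕ := ⌈Real.logb (1 + ε) (r / l)⌉₊
  have hr : r ≤ l * (1 + ε) ^ max 1 k :=
    calc r ≤ l * (1 + ε) ^ k :=
          (div_le_iff₀' hl).1 (le_pow_natCeil_logb hq (div_pos (hl.trans_le hlr) hl))
      _ ≤ l * (1 + ε) ^ max 1 k := by gcongr; exacts [hq.le, le_max_right 1 k]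
  obtain ⟨L, hcard, hupper, hcover⟩ := exists_affine_cover_of_le_mul_pow hconc hmono hf0 hl
    (one_pos.trans hq) (Nat.one_le_iff_ne_zero.1 (le_max_left 1 k)) hr
  refine ⟨L, ?_, hupper, hcover⟩
  have hk : k = ⌈Real.logb (1 + ε) (r / l)⌉.toNat := (Int.ceil_toNat _).symm
  omega

end Cover

/-- **Logarithmically many linear pieces cover a concave function (cf. Theorem 4.1).**
Let `ε > 0`, let `r ≥ 1` be real, and let `f : [0,r] → ℝ` be concave, nondecreasing, and
nonnegative with `f 0 = 0`. Then there is a finite set `L` of affine functions (as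
slope-intercept pairs) with `|L| ≤ max(1, ⌈log_{1+ε} r⌉)` such that every `g ∈ L` upper
bounds `f` on `[0,r]`, and every `x ∈ [1,r]` is `(1+ε)`-approximated by some `g ∈ L`. -/
theorem concave_log_cover
    (ε : ℝ) (hε : 0 < ε) (r : ℝ) (hr : 1 ≤ r) (f : ℝ → ℝ)
    (hconc : ConcaveOn ℝ (Set.Icc 0 r) f)
    (hmono : MonotoneOn f (Set.Icc 0 r))
    (hnn : ∀ x ∈ Set.Icc (0 : ℝ) r, 0 ≤ f x)
    (hf0 : f 0 = 0) :
    ∃ L : Finset (ℝ × ℝ),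
      (L.card : ℤ) ≤ max 1 ⌈Real.logb (1 + ε) r⌉ ∧
      (∀ g ∈ L, ∀ x ∈ Set.Icc (0 : ℝ) r, f x ≤ g.1 * x + g.2) ∧
      (∀ x ∈ Set.Icc (1 : ℝ) r, ∃ g ∈ L, g.1 * x + g.2 ≤ (1 + ε) * f x) := by
  simpa only [div_one] using concave_log_cover_general hε one_pos hr hconc hmono hf0.ge
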